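/- arXiv:2411.14112 — 8 statements merged into one kernel-verified Lean document; each statement's English description precedes it below -/
import Mathlib

section
/- Let n ≥ 4 and let k be an integer with 2 ≤ k ≤ ⌊n/2⌋. Then α(n,k,0,1) ≥ b(n,k,0), and equality holds if and only if n = 2k. -/
noncomputable def alphaF (n k : ℕ) (H c : ℝ) : ℝ :=
  ((n : ℝ) - 1 -
      (k : ℝ) * ((n : ℝ) - (k : ℝ)) * ((n : ℝ) - 2) /
        ((k : ℝ) * ((n : ℝ) - 2 * (k : ℝ)) + (n : ℝ) * ((k : ℝ) - 1) * ((n : ℝ) - (k : ℝ)))) *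
    (c + H ^ 2)

noncomputable def bF (n k : ℕ) (H : ℝ) : ℝ :=
  (n : ℝ) * ((k : ℝ) - 1) / (k : ℝ) +
    (n : ℝ) * ((k : ℝ) - 1) * H / (2 * (k : ℝ) ^ 2) *
      ((n : ℝ) * H + Real.sqrt ((n : ℝ) ^ 2 * H ^ 2 + 4 * (k : ℝ) * ((n : ℝ) - (k : ℝ))))

theorem stmt_1 (n k : ℕ) (hn : 4 ≤ n) (hk : 2 ≤ k) (hk' : k ≤ n / 2) :
    alphaF n k 0 1 ≥ bF n k 0 ∧ (alphaF n k 0 1 = bF n k 0 ↔ n = 2 * k) := by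
  have hkn : 2 * k ≤ n := by omega
  have h1 : (2 : ℝ) * k ≤ n := by exact_mod_cast hkn
  have h2 : (2 : ℝ) ≤ k := by exact_mod_cast hk
  have hA : (0 : ℝ) < n - k := by linarith
  have hN : (0 : ℝ) < n := by linarith
  have hK : (0 : ℝ) < k := by linarith
  have hK1 : (0 : ℝ) < k - 1 := by linarith
  have hT : (0 : ℝ) ≤ n - 2 * k := by linarith
  have hD : (0 : ℝ) < (k : ℝ) * ((n : ℝ) - 2 * (k : ℝ)) +
      (n : ℝ) * ((k : ℝ) - 1) * ((n : ℝ) - (k : ℝ)) :=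
    add_pos_of_nonneg_of_pos (mul_nonneg hK.le hT) (mul_pos (mul_pos hN hK1) hA)
  have key : alphaF n k 0 1 - bF n k 0 =
      (((n : ℝ) - k) * n * (k - 1) / (k * ((k : ℝ) * ((n : ℝ) - 2 * (k : ℝ)) +
        (n : ℝ) * ((k : ℝ) - 1) * ((n : ℝ) - (k : ℝ))))) * (n - 2 * k) := by
    unfold alphaF bF
    have hD' := hD.ne'
    have hK' := hK.ne'
    generalize hd : (k : ℝ) * ((n : ℝ) - 2 * (k : ℝ)) +
      (n : ℝ) * ((k : ℝ) - 1) * ((n : ℝ) - (k : ℝ)) = D at *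
    simp only [mul_zero, zero_div, zero_mul, add_zero]
    field_simp
    rw [← hd]
    ring
  have hC : (0 : ℝ) < (((n : ℝ) - k) * n * (k - 1) / (k * ((k : ℝ) * ((n : ℝ) - 2 * (k : ℝ)) +
        (n : ℝ) * ((k : ℝ) - 1) * ((n : ℝ) - (k : ℝ))))) :=
    div_pos (mul_pos (mul_pos hA hN) hK1) (mul_pos hK hD)
  refine ⟨?_, ?_⟩
  · have := mul_nonneg hC.le hT
    linarith
  · rw [← sub_eq_zero, key, mul_eq_zero, or_iff_right hC.ne', sub_eq_zero]
    exact_mod_cast Iff.rfl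
end

section
/- Let n ≥ 4 and let k be an integer with 2 ≤ k ≤ ⌊n/2⌋. Then there exists a real H₀ > 0 such that for every real H > H₀ one has α(n,k,H,1) < b(n,k,H). -/
theorem stmt_2 (n k : ℕ) (hn : 4 ≤ n) (hk : 2 ≤ k) (hk' : k ≤ n / 2) :
    ∃ H₀ : ℝ, 0 < H₀ ∧ ∀ H : ℝ, H₀ < H → alphaF n k H 1 < bF n k H := by
  have h2 : 2 * k ≤ n := by omega
  have hnR : (4:ℝ) ≤ n := by exact_mod_cast hn
  have hkR : (2:ℝ) ≤ k := by exact_mod_cast hk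
  have h2R : 2 * (k:ℝ) ≤ n := by exact_mod_cast h2
  unfold alphaF bF
  generalize (n:ℝ) = x at *
  generalize (k:ℝ) = y at *
  refine ⟨y * x, by positivity, fun H hH => ?_⟩
  have hH0 : 0 < H := lt_trans (by positivity) hH
  have hq : 0 ≤ y * (x - y) * (x - 2) / (y * (x - 2 * y) + x * (y - 1) * (x - y)) := by
    have h1 : 0 ≤ x - y := by linarith
    have h3 : 0 ≤ x - 2 := by linarith
    have h4 : 0 ≤ x - 2 * y := by linarith
    have h5 : 0 ≤ y - 1 := by linarith
    positivity
  have hy1 : 0 < y - 1 := by linarith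
  have hs : x * H ≤ √(x ^ 2 * H ^ 2 + 4 * y * (x - y)) := by
    apply Real.le_sqrt_of_sq_le
    have : 0 ≤ y * (x - y) := mul_nonneg (by linarith) (by linarith)
    nlinarith
  have hd : 1 ≤ x ^ 2 * (y - 1) - y ^ 2 * (x - 1) := by
    obtain ⟨t, ht⟩ : ∃ t, x = 2 * y + t := ⟨x - 2 * y, by ring⟩
    obtain ⟨u, hu⟩ : ∃ u, y = 2 + u := ⟨y - 2, by ring⟩
    have ht0 : 0 ≤ t := by linarith
    have hu0 : 0 ≤ u := by linarith
    subst ht hu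
    have : 0 ≤ (2 * (2 + u) + t) ^ 2 * (2 + u - 1) - (2 + u) ^ 2 * (2 * (2 + u) + t - 1) - 1 := by
      ring_nf
      positivity
    linarith
  have hHH : (y * x) ^ 2 < H ^ 2 := by
    have : 0 ≤ y * x := by positivity
    gcongr
  have hA : (x - 1 - y * (x - y) * (x - 2) / (y * (x - 2 * y) + x * (y - 1) * (x - y))) * (1 + H ^ 2)
      ≤ (x - 1) * (1 + H ^ 2) := by
    exact mul_le_mul_of_nonneg_right (by linarith) (by positivity)
  have hB : x * (y - 1) * H / (2 * y ^ 2) * (x * H + x * H) ≤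
      x * (y - 1) * H / (2 * y ^ 2) * (x * H + √(x ^ 2 * H ^ 2 + 4 * y * (x - y))) := by
    gcongr
  have hB' : x * (y - 1) * H / (2 * y ^ 2) * (x * H + x * H) = x ^ 2 * (y - 1) * H ^ 2 / y ^ 2 := by
    field_simp
    ring
  have hC : 0 < x * (y - 1) / y := by positivity
  have hM : (x - 1) * (1 + H ^ 2) ≤ x ^ 2 * (y - 1) * H ^ 2 / y ^ 2 := by
    rw [le_div_iff₀ (by positivity)]
    have e1 : H ^ 2 ≤ (x ^ 2 * (y - 1) - y ^ 2 * (x - 1)) * H ^ 2 :=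
      le_mul_of_one_le_left (by positivity) hd
    have e2 : y ^ 2 * (x - 1) ≤ y ^ 2 * x ^ 2 := by
      gcongr
      nlinarith
    nlinarith
  linarith
end

section
/- Let n ≥ 5 be an integer and define φ : [2, n/2] → ℝ by φ(s) := s(n−s)/(s(n−2s)+n(s−1)(n−s)). Then φ is strictly monotone decreasing on [2, n/2] (that is, if 2 ≤ s < t ≤ n/2 then φ(s) > φ(t)). -/
noncomputable def phiF (n : ℕ) (s : ℝ) : ℝ :=
  s * ((n : ℝ) - s) / (s * ((n : ℝ) - 2 * s) + (n : ℝ) * (s - 1) * ((n : ℝ) - s))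

theorem stmt_4 (n : ℕ) (hn : 5 ≤ n) :
    ∀ s t : ℝ, 2 ≤ s → s < t → t ≤ (n : ℝ) / 2 → phiF n t < phiF n s := by
  intro s t hs hst ht
  have hn' : (5 : ℝ) ≤ n := by exact_mod_cast hn
  have key : ∀ x : ℝ, phiF n x = x * ((n : ℝ) - x) /
      (((n : ℝ) + 2) * (x * ((n : ℝ) - x)) - (n : ℝ) ^ 2) := by
    intro x
    unfold phiF
    congr 1
    ring
  rw [key, key]
  have hu : 2 * ((n : ℝ) - 2) ≤ s * ((n : ℝ) - s) := by
    nlinarith [mul_nonneg (sub_nonneg.2 hs) (by linarith : (0 : ℝ) ≤ (n : ℝ) - 2 - s)]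
  have huv : s * ((n : ℝ) - s) < t * ((n : ℝ) - t) := by
    nlinarith [mul_pos (sub_pos.2 hst) (by linarith : (0 : ℝ) < (n : ℝ) - s - t)]
  generalize s * ((n : ℝ) - s) = u at *
  generalize t * ((n : ℝ) - t) = v at *
  have hD : 0 < ((n : ℝ) + 2) * u - (n : ℝ) ^ 2 := by
    nlinarith [mul_le_mul_of_nonneg_left hu (by linarith : (0 : ℝ) ≤ (n : ℝ) + 2)]
  have hE : 0 < ((n : ℝ) + 2) * v - (n : ℝ) ^ 2 := by
    nlinarith [mul_lt_mul_of_pos_left huv (by linarith : (0 : ℝ) < (n : ℝ) + 2)]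
  rw [div_lt_div_iff₀ hE hD]
  nlinarith [mul_lt_mul_of_pos_left huv (by positivity : (0 : ℝ) < (n : ℝ) ^ 2)]
end

section
/- Let n ≥ 5 be an integer and let H, c be reals with c + H² > 0. Then the function k ↦ α(n,k,H,c) is strictly monotone increasing for integers 2 ≤ k ≤ ⌊n/2⌋, i.e., if 2 ≤ k < k' ≤ ⌊n/2⌋ are integers then α(n,k,H,c) < α(n,k',H,c). -/
theorem stmt_5 (n : ℕ) (hn : 5 ≤ n) (H c : ℝ) (hpos : 0 < c + H ^ 2) :
    ∀ k k' : ℕ, 2 ≤ k → k < k' → k' ≤ n / 2 → alphaF n k H c < alphaF n k' H c := by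
  intro k k' hk hkk hk'
  have h2 : 2 * k' ≤ n := by omega
  have hnR : (5:ℝ) ≤ n := by exact_mod_cast hn
  have hkR : (2:ℝ) ≤ k := by exact_mod_cast hk
  have hkkR : (k:ℝ) < k' := by exact_mod_cast hkk
  have h2R : 2 * (k':ℝ) ≤ n := by exact_mod_cast h2
  unfold alphaF
  generalize (n:ℝ) = N at *
  generalize (k:ℝ) = a at *
  generalize (k':ℝ) = b at *
  have hP : a * (N - a) < b * (N - b) := by
    nlinarith [mul_pos (sub_pos.2 hkkR) (show 0 < N - a - b by linarith)]
  have hP2 : 2 * (N - 2) ≤ a * (N - a) := by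
    nlinarith [mul_nonneg (sub_nonneg.2 hkR) (show 0 ≤ N - a - 2 by linarith)]
  have e : ∀ x : ℝ, x * (N - 2 * x) + N * (x - 1) * (N - x) = (N + 2) * (x * (N - x)) - N ^ 2 := by
    intro x; ring
  rw [e, e]
  generalize a * (N - a) = P at *
  generalize b * (N - b) = Q at *
  have hD : 0 < (N + 2) * P - N ^ 2 := by nlinarith
  have hD' : 0 < (N + 2) * Q - N ^ 2 := by nlinarith
  apply mul_lt_mul_of_pos_right _ hpos
  apply sub_lt_sub_left
  rw [div_lt_div_iff₀ hD' hD]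
  have : 0 < (N - 2) * N ^ 2 * (Q - P) := by
    have h1 : 0 < N - 2 := by linarith
    have h3 : 0 < Q - P := by linarith
    have h4 : 0 < N := by linarith
    positivity
  nlinarith
end

section
/- Fix integers n ≥ 5, m ≥ 1, a real c, symmetric matrices H_1,…,H_m as in the context, and an integer k with 2 ≤ k ≤ ⌊n/2⌋. If Ric − α(n,k,H,c)·I_n is positive semidefinite, then for every integer q with 2 ≤ q ≤ k one has Θ_q ≤ q(n−q)c. -/
open Finset

noncomputable def cF (n m : ℕ) (A : Fin m → Matrix (Fin n) (Fin n) ℝ) (a : Fin m) : ℝ :=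
  (A a).trace / (n : ℝ)

noncomputable def HF (n m : ℕ) (A : Fin m → Matrix (Fin n) (Fin n) ℝ) : ℝ :=
  Real.sqrt (∑ a : Fin m, cF n m A a ^ 2)

noncomputable def RicF (n m : ℕ) (c : ℝ) (A : Fin m → Matrix (Fin n) (Fin n) ℝ) :
    Matrix (Fin n) (Fin n) ℝ :=
  (((n : ℝ) - 1) * c) • (1 : Matrix (Fin n) (Fin n) ℝ) +
    ∑ a : Fin m, (((n : ℝ) * cF n m A a) • A a - A a * A a)

noncomputable def ThetaF (n m : ℕ) (A : Fin m → Matrix (Fin n) (Fin n) ℝ) (q : ℕ) : ℝ :=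
  ∑ i ∈ Finset.univ.filter (fun i : Fin n => (i : ℕ) < q),
    ∑ j ∈ Finset.univ.filter (fun j : Fin n => q ≤ (j : ℕ)),
      (2 * ∑ a : Fin m, (A a i j) ^ 2 - ∑ a : Fin m, A a i i * A a j j)

lemma alg_core (n q k x y z E : ℝ) (hn : 5 ≤ n) (hq : 2 ≤ q) (hqk : q ≤ k) (hk : 2 * k ≤ n)
    (hx : 0 ≤ x) (hy : 0 ≤ y) (g : ℝ)
    (hg : g = k * (n - k) * (n - 2) / (k * (n - 2 * k) + n * (k - 1) * (n - k)))
    (h1 : x + y / q - (n - 2) * z ≤ q * (g * E))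
    (h2 : x + y / (n - q) + (n - 2) * z ≤ (n - q) * (g * E)) :
    2 * x + y - (n - 2 * q) * z ≤ q * (n - q) * E := by
  have hq0 : 0 < q := by linarith
  have hnq : 0 < n - q := by linarith
  have hn2 : 0 < n - 2 := by linarith
  have hpq : 2 * (n - 2) ≤ q * (n - q) := by nlinarith
  have hpk : q * (n - q) ≤ k * (n - k) := by nlinarith
  set p := q * (n - q) with hp
  set r := k * (n - k) with hr
  have hD : k * (n - 2 * k) + n * (k - 1) * (n - k) = r * (n + 2) - n ^ 2 := by rw [hr]; ring
  rw [hD] at hg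
  have hDpos : 0 < r * (n + 2) - n ^ 2 := by nlinarith
  have hp0 : 0 < p := by positivity
  have hr0 : 0 < r := by linarith
  have hgpos : 0 < g := by rw [hg]; positivity
  have hsum : 0 ≤ n * (g * E) := by
    have : 0 ≤ y / q := by positivity
    have : 0 ≤ y / (n - q) := by positivity
    nlinarith
  have hE : 0 ≤ E := by
    have h3 : 0 < n * g := by positivity
    rw [← mul_assoc] at hsum
    exact nonneg_of_mul_nonneg_right hsum h3
  set d := (n - 2 * q) / (n - 2) with hd
  have hdn : d * (n - 2) = n - 2 * q := by rw [hd]; field_simp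
  have hd0 : 0 ≤ d := div_nonneg (by linarith) hn2.le
  have hd1 : d ≤ 1 := by rw [hd, div_le_one hn2]; linarith
  set s := (p - d * (n - 2 * q) / 2) / n with hs
  have hsn : s * n = p - d * (n - 2 * q) / 2 := by rw [hs]; field_simp
  have hs1 : 1 ≤ s := by
    rw [hs, le_div_iff₀ (by linarith)]
    have : d * (n - 2 * q) ≤ n - 4 := by nlinarith
    linarith
  have hl := mul_le_mul_of_nonneg_left h1 (show 0 ≤ s + d / 2 by linarith)
  have hm := mul_le_mul_of_nonneg_left h2 (show 0 ≤ s - d / 2 by linarith)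
  have hyy : (s + d / 2) * (y / q) + (s - d / 2) * (y / (n - q)) = y := by
    have : (s + d / 2) * (y / q) + (s - d / 2) * (y / (n - q))
        = y * (s * n + d * (n - 2 * q) / 2) / p := by
      rw [hp]; field_simp; ring
    rw [this, hsn]; field_simp; ring
  have hzz : -(s + d / 2) * ((n - 2) * z) + (s - d / 2) * ((n - 2) * z) = -(n - 2 * q) * z := by
    rw [← hdn]; ring
  have hR : (s + d / 2) * q + (s - d / 2) * (n - q) = p - d * (n - 2 * q) := by
    linear_combination hsn
  have hkey : g * (p - d * (n - 2 * q)) ≤ p := by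
    have e : (p - d * (n - 2 * q)) * (n - 2) = p * (n + 2) - n ^ 2 := by
      have : d * (n - 2 * q) * (n - 2) = (n - 2 * q) ^ 2 := by rw [← hdn]; ring
      rw [sub_mul, this, hp]; ring
    have e2 : g * (p - d * (n - 2 * q)) = r * (p * (n + 2) - n ^ 2) / (r * (n + 2) - n ^ 2) := by
      rw [hg, ← e]; ring
    rw [e2, div_le_iff₀ hDpos]
    nlinarith
  have hfin := mul_le_mul_of_nonneg_right hkey hE
  have hxx : 2 * x ≤ 2 * s * x := by nlinarith
  have hR' : (s + d / 2) * (q * (g * E)) + (s - d / 2) * ((n - q) * (g * E))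
     = g * (p - d * (n - 2 * q)) * E := by rw [← hR]; ring
  linarith

lemma row_bound (n m : ℕ) (c al : ℝ)
    (A : Fin m → Matrix (Fin n) (Fin n) ℝ) (hA : ∀ a : Fin m, (A a).IsSymm)
    (hRic : (RicF n m c A - al • (1 : Matrix (Fin n) (Fin n) ℝ)).PosSemidef) (i : Fin n) :
    al ≤ (n - 1) * c + ∑ a, (n * cF n m A a * A a i i - ∑ j, A a i j ^ 2) := by
  have h := hRic.diag_nonneg (i := i)
  have e : ∀ a, (A a * A a) i i = ∑ j, A a i j ^ 2 := fun a => by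
    rw [Matrix.mul_apply]
    refine sum_congr rfl fun j _ => ?_
    rw [(hA a).apply, sq]
  simp [RicF, Matrix.sum_apply, e] at h
  simp only [sum_sub_distrib]
  linarith

/-- summed over a set of rows `S` with complement `T` -/
lemma block_bound (n m : ℕ) (c al : ℝ)
    (A : Fin m → Matrix (Fin n) (Fin n) ℝ)
    (h : ∀ i, al ≤ (n - 1) * c + ∑ a, (n * cF n m A a * A a i i - ∑ j, A a i j ^ 2))
    (S T : Finset (Fin n)) (hST : Disjoint S T) (hU : S ∪ T = univ) (hS : 0 < (S.card : ℝ)) :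
    S.card * al ≤ S.card * ((n - 1) * c) + ∑ a, (n * cF n m A a * (∑ i ∈ S, A a i i)
      - (∑ i ∈ S, A a i i) ^ 2 / S.card - ∑ i ∈ S, ∑ j ∈ T, A a i j ^ 2) := by
  have h1 : ∑ i ∈ S, al ≤ ∑ i ∈ S, ((n - 1) * c + ∑ a, (n * cF n m A a * A a i i - ∑ j, A a i j ^ 2)) :=
    sum_le_sum fun i _ => h i
  rw [sum_add_distrib, sum_const, sum_const, nsmul_eq_mul, nsmul_eq_mul, sum_comm] at h1
  refine h1.trans ?_
  gcongr with a
  rw [sum_sub_distrib, ← mul_sum]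
  have e : ∑ i ∈ S, ∑ j, A a i j ^ 2
      = ∑ i ∈ S, ∑ j ∈ S, A a i j ^ 2 + ∑ i ∈ S, ∑ j ∈ T, A a i j ^ 2 := by
    rw [← sum_add_distrib]
    refine sum_congr rfl fun i _ => ?_
    rw [← hU, sum_union hST]
  have f : (∑ i ∈ S, A a i i) ^ 2 / S.card ≤ ∑ i ∈ S, ∑ j ∈ S, A a i j ^ 2 := by
    rw [div_le_iff₀' hS]
    refine sq_sum_le_card_mul_sum_sq.trans ?_
    gcongr with i hi
    exact single_le_sum (f := fun j => A a i j ^ 2) (fun j _ => sq_nonneg _) hi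
  linarith

theorem stmt_10 (n m : ℕ) (hn : 5 ≤ n) (hm : 1 ≤ m) (c : ℝ)
    (A : Fin m → Matrix (Fin n) (Fin n) ℝ) (hA : ∀ a : Fin m, (A a).IsSymm)
    (k : ℕ) (hk : 2 ≤ k) (hk' : k ≤ n / 2)
    (hRic : (RicF n m c A -
        alphaF n k (HF n m A) c • (1 : Matrix (Fin n) (Fin n) ℝ)).PosSemidef) :
    ∀ q : ℕ, 2 ≤ q → q ≤ k →
      ThetaF n m A q ≤ (q : ℝ) * ((n : ℝ) - (q : ℝ)) * c := by
  intro q hq hqk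
  have hH : HF n m A ^ 2 = ∑ a, cF n m A a ^ 2 := Real.sq_sqrt (sum_nonneg fun _ _ => sq_nonneg _)
  have hrow := row_bound n m c _ A hA hRic
  have hqn : q ≤ n := by omega
  set S := Finset.univ.filter (fun i : Fin n => (i : ℕ) < q) with hSd
  set T := Finset.univ.filter (fun i : Fin n => q ≤ (i : ℕ)) with hTd
  have hdis : Disjoint S T := by
    rw [Finset.disjoint_left]; intro i; simp [hSd, hTd]
  have hU : S ∪ T = univ := by
    ext i; simp [hSd, hTd]; omega
  have hcS : S.card = q := by
    rw [hSd, Fin.card_filter_val_lt]; omega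
  have hcST : S.card + T.card = n := by
    rw [← card_union_of_disjoint hdis, hU]; simp
  have hcS' : (S.card : ℝ) = q := by rw [hcS]
  have hcT' : (T.card : ℝ) = n - q := by
    have h : (S.card : ℝ) + T.card = n := by exact_mod_cast hcST
    linarith
  have hnR : (5 : ℝ) ≤ n := by exact_mod_cast hn
  have hqR : (2 : ℝ) ≤ q := by exact_mod_cast hq
  have hqkR : (q : ℝ) ≤ k := by exact_mod_cast hqk
  have hkR : 2 * (k : ℝ) ≤ n := by
    have : 2 * k ≤ n := by omega
    exact_mod_cast this
  have b1 := block_bound n m c _ A hrow S T hdis hU (by rw [hcS']; linarith)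
  have b2 := block_bound n m c _ A hrow T S hdis.symm (by rw [union_comm, hU])
    (by rw [hcT']; linarith)
  rw [hcS'] at b1
  rw [hcT'] at b2
  set t : Fin m → ℝ := fun a => ∑ i ∈ S, A a i i - q * cF n m A a with ht
  have e1 : ∀ a, ∑ i ∈ S, A a i i = t a + q * cF n m A a := fun a => by simp [ht]
  have e2 : ∀ a, ∑ i ∈ T, A a i i = -t a + (n - q) * cF n m A a := fun a => by
    have : (n : ℝ) * cF n m A a = ∑ i ∈ S, A a i i + ∑ i ∈ T, A a i i := by
      rw [← sum_union hdis, hU, cF, Matrix.trace]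
      simp only [Matrix.diag]
      field_simp
    simp only [ht]; linarith
  set X : Fin m → ℝ := fun a => ∑ i ∈ S, ∑ j ∈ T, A a i j ^ 2 with hX
  have e3 : ∀ a, ∑ i ∈ T, ∑ j ∈ S, A a i j ^ 2 = X a := fun a => by
    rw [sum_comm]
    refine sum_congr rfl fun i _ => sum_congr rfl fun j _ => ?_
    rw [(hA a).apply]
  have hTh : ThetaF n m A q = ∑ a, (2 * X a - (t a + q * cF n m A a) * (-t a + (n - q) * cF n m A a)) := by
    unfold ThetaF
    simp only [mul_sum, ← sum_sub_distrib]
    rw [← hSd, ← hTd]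
    have : ∀ i ∈ S, ∑ j ∈ T, ∑ a, (2 * A a i j ^ 2 - A a i i * A a j j)
      = ∑ a, ∑ j ∈ T, (2 * A a i j ^ 2 - A a i i * A a j j) := fun i _ => sum_comm
    rw [sum_congr rfl this, sum_comm]
    refine sum_congr rfl fun a _ => ?_
    rw [← e1, ← e2, sum_mul_sum]
    simp only [hX, mul_sum, sum_sub_distrib]
  simp only [e1, e2, e3] at b1 b2
  have key := alg_core n q k (∑ a, X a) (∑ a, t a ^ 2) (∑ a, cF n m A a * t a) (c + HF n m A ^ 2)
    hnR hqR hqkR hkR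
    (sum_nonneg fun a _ => sum_nonneg fun i _ => sum_nonneg fun j _ => sq_nonneg _)
    (sum_nonneg fun a _ => sq_nonneg _) _ rfl
  have hq0 : (q : ℝ) ≠ 0 := by linarith
  have hnq0 : (n : ℝ) - q ≠ 0 := by
    have : (0 : ℝ) < n - q := by linarith
    exact this.ne'
  have s1 : ∑ a, (n * cF n m A a * (t a + q * cF n m A a) - (t a + q * cF n m A a) ^ 2 / q - X a)
      = (n - 2) * (∑ a, cF n m A a * t a) + q * (n - 1) * HF n m A ^ 2
        - (∑ a, t a ^ 2) / q - ∑ a, X a := by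
    rw [hH, mul_sum, mul_sum, sum_div, ← sum_add_distrib, ← sum_sub_distrib, ← sum_sub_distrib]
    refine sum_congr rfl fun a _ => ?_
    field_simp; ring
  have s2 : ∑ a, (n * cF n m A a * (-t a + (n - q) * cF n m A a)
        - (-t a + (n - q) * cF n m A a) ^ 2 / (n - q) - X a)
      = -(n - 2) * (∑ a, cF n m A a * t a) + (n - q) * (n - 1) * HF n m A ^ 2
        - (∑ a, t a ^ 2) / (n - q) - ∑ a, X a := by
    rw [hH, mul_sum, mul_sum, sum_div, ← sum_add_distrib, ← sum_sub_distrib, ← sum_sub_distrib]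
    refine sum_congr rfl fun a _ => ?_
    field_simp; ring
  have s3 : ThetaF n m A q = 2 * (∑ a, X a) + ∑ a, t a ^ 2
      - (n - 2 * q) * (∑ a, cF n m A a * t a) - q * (n - q) * HF n m A ^ 2 := by
    rw [hTh, hH, mul_sum, mul_sum, mul_sum, ← sum_add_distrib, ← sum_sub_distrib, ← sum_sub_distrib]
    refine sum_congr rfl fun a _ => ?_
    ring
  rw [s1] at b1
  rw [s2] at b2
  unfold alphaF at b1 b2
  have := key (by linarith) (by linarith)
  rw [s3]
  linarith
end

section
/- Fix integers n ≥ 5, m ≥ 1, a real c, symmetric matrices H_1,…,H_m as in the context, and an integer k with 3 ≤ k ≤ ⌊n/2⌋. If Ric − α(n,k,H,c)·I_n is positive semidefinite and c + H² > 0, then for every integer q with 2 ≤ q ≤ k−1 one has the strict inequality Θ_q < q(n−q)c. -/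
open Finset

lemma aux_sum (n : ℕ) (P Q : Finset (Fin n)) (hPQ : Disjoint P Q) (hU : P ∪ Q = Finset.univ)
    (M : Matrix (Fin n) (Fin n) ℝ) (hM : M.IsSymm) (p : ℝ) (hp : (P.card : ℝ) = p) (hp0 : 0 < p) :
    (∑ i ∈ P, M i i) ^ 2 / p + ∑ i ∈ P, ∑ j ∈ Q, M i j ^ 2 ≤ ∑ i ∈ P, (M * M) i i := by
  have h1 : ∀ i, (M * M) i i = ∑ j ∈ P, M i j ^ 2 + ∑ j ∈ Q, M i j ^ 2 := by
    intro i
    rw [← Finset.sum_union hPQ, hU, Matrix.mul_apply]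
    refine Finset.sum_congr rfl fun j _ => ?_
    rw [hM.apply i j]; ring
  have h2 : (∑ i ∈ P, M i i) ^ 2 / p ≤ ∑ i ∈ P, M i i ^ 2 := by
    rw [div_le_iff₀ hp0, mul_comm, ← hp]
    exact sq_sum_le_card_mul_sum_sq
  have h3 : ∑ i ∈ P, M i i ^ 2 ≤ ∑ i ∈ P, ∑ j ∈ P, M i j ^ 2 :=
    Finset.sum_le_sum fun i hi =>
      Finset.single_le_sum (f := fun j => M i j ^ 2) (fun j _ => sq_nonneg _) hi
  simp only [h1, Finset.sum_add_distrib]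
  linarith

lemma aux_ric (n m : ℕ) (c al : ℝ) (A : Fin m → Matrix (Fin n) (Fin n) ℝ)
    (hA : ∀ a : Fin m, (A a).IsSymm)
    (hRic : (RicF n m c A - al • (1 : Matrix (Fin n) (Fin n) ℝ)).PosSemidef)
    (P Q : Finset (Fin n)) (hPQ : Disjoint P Q) (hU : P ∪ Q = Finset.univ)
    (p : ℝ) (hp : (P.card : ℝ) = p) (hp0 : 0 < p) :
    p * al ≤ p * (((n : ℝ) - 1) * c) + ∑ a, ((n : ℝ) * cF n m A a * (∑ i ∈ P, A a i i)
      - (∑ i ∈ P, A a i i) ^ 2 / p - ∑ i ∈ P, ∑ j ∈ Q, A a i j ^ 2) := by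
  have h1 : 0 ≤ ∑ i ∈ P, (RicF n m c A - al • (1 : Matrix (Fin n) (Fin n) ℝ)) i i :=
    Finset.sum_nonneg fun i _ => hRic.diag_nonneg
  have h2 : ∑ i ∈ P, (RicF n m c A - al • (1 : Matrix (Fin n) (Fin n) ℝ)) i i =
      p * (((n : ℝ) - 1) * c) + ∑ a, ((n : ℝ) * cF n m A a * (∑ i ∈ P, A a i i)
      - ∑ i ∈ P, (A a * A a) i i) - p * al := by
    simp only [RicF, Matrix.sub_apply, Matrix.add_apply, Matrix.smul_apply, Matrix.one_apply_eq,
      Matrix.sum_apply, smul_eq_mul, Finset.sum_sub_distrib, Finset.sum_add_distrib,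
      Finset.sum_const, nsmul_eq_mul, hp, Finset.mul_sum]
    rw [Finset.sum_comm, Finset.sum_comm (s := P) (f := fun i a => (A a * A a) i i)]
    ring
  have h3 := Finset.sum_le_sum (s := Finset.univ) fun a (_ : a ∈ Finset.univ) =>
    sub_le_sub_left (aux_sum n P Q hPQ hU (A a) (hA a) p hp hp0)
      ((n : ℝ) * cF n m A a * (∑ i ∈ P, A a i i))
  simp only [← sub_sub] at h3
  linarith

lemma aux_delta (n k q : ℝ) (hq : 2 ≤ q) (hqk : q + 1 ≤ k) (hkn : 2 * k ≤ n) :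
    0 < k * (n - 2 * k) + n * (k - 1) * (n - k) ∧
    k * (n - k) * (n - 2) / (k * (n - 2 * k) + n * (k - 1) * (n - k)) *
      (q * (n - 2 * q) + n * (q - 1) * (n - q)) < q * (n - q) * (n - 2) := by
  have e : ∀ x : ℝ, x * (n - 2 * x) + n * (x - 1) * (n - x) = (n + 2) * (x * (n - x)) - n ^ 2 := by
    intro x; ring
  rw [e, e]
  have hpq : 2 * (n - 2) ≤ q * (n - q) := by nlinarith
  have hpk : q * (n - q) < k * (n - k) := by nlinarith
  generalize q * (n - q) = u at *
  generalize k * (n - k) = v at *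
  have hn : 6 ≤ n := by linarith
  have hd : 0 < (n + 2) * v - n ^ 2 := by nlinarith
  refine ⟨hd, ?_⟩
  rw [div_mul_eq_mul_div, div_lt_iff₀ hd]
  nlinarith [mul_pos (mul_pos (sub_pos.2 hpk) (by linarith : 0 < n - 2)) (by positivity : 0 < n ^ 2)]

lemma aux_final (n q c al W U V X d : ℝ) (hq : 2 ≤ q) (hqn : 2 * q + 2 ≤ n)
    (hal : al = (n - 1) * (c + W) - d) (hX : 0 ≤ X)
    (h1 : q * al ≤ q * ((n - 1) * c) + (n * V - U / q - X))
    (h2 : (n - q) * al ≤ (n - q) * ((n - 1) * c) +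
      (n * (n * W - V) - (n ^ 2 * W - 2 * n * V + U) / (n - q) - X))
    (hd : d * (q * (n - 2 * q) + n * (q - 1) * (n - q)) < q * (n - q) * (n - 2) * (c + W)) :
    2 * X - (n * V - U) < q * (n - q) * c := by
  have hnq : 0 < n - q := by linarith
  have hn2 : 0 < n - 2 := by linarith
  have hq0 : 0 < q := by linarith
  subst hal
  obtain ⟨u, hu⟩ : ∃ u, u = U / q := ⟨_, rfl⟩
  obtain ⟨w, hw⟩ : ∃ w, w = (n ^ 2 * W - 2 * n * V + U) / (n - q) := ⟨_, rfl⟩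
  rw [← hu] at h1
  rw [← hw] at h2
  rw [eq_div_iff hq0.ne'] at hu
  rw [eq_div_iff hnq.ne'] at hw
  have hl : 0 ≤ q * (n - q - 1) := mul_nonneg (by linarith) (by linarith)
  have hm : 0 ≤ (n - q) * (q - 1) := mul_nonneg (by linarith) (by linarith)
  have k1 := mul_le_mul_of_nonneg_left h1 hl
  have k2 := mul_le_mul_of_nonneg_left h2 hm
  have k3 : 0 ≤ (2 * q * (n - q) - n - 2 * (n - 2)) * X := mul_nonneg (by nlinarith) hX
  have hUe : q * (n - q - 1) * u = (n - q - 1) * U := by rw [← hu]; ring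
  have hWe : (n - q) * (q - 1) * w = (q - 1) * (n ^ 2 * W - 2 * n * V + U) := by rw [← hw]; ring
  have key : (2 * X - (n * V - U)) * (n - 2) < (q * (n - q) * c) * (n - 2) := by
    nlinarith
  exact lt_of_mul_lt_mul_right key hn2.le

theorem stmt_11 (n m : ℕ) (hn : 5 ≤ n) (hm : 1 ≤ m) (c : ℝ)
    (A : Fin m → Matrix (Fin n) (Fin n) ℝ) (hA : ∀ a : Fin m, (A a).IsSymm)
    (k : ℕ) (hk : 3 ≤ k) (hk' : k ≤ n / 2)
    (hRic : (RicF n m c A -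
        alphaF n k (HF n m A) c • (1 : Matrix (Fin n) (Fin n) ℝ)).PosSemidef)
    (hpos : 0 < c + HF n m A ^ 2) :
    ∀ q : ℕ, 2 ≤ q → q ≤ k - 1 →
      ThetaF n m A q < (q : ℝ) * ((n : ℝ) - (q : ℝ)) * c := by
  intro q hq hqk
  have rq : (2 : ℝ) ≤ q := by exact_mod_cast hq
  have rqk : (q : ℝ) + 1 ≤ k := by exact_mod_cast (by omega : q + 1 ≤ k)
  have rkn : 2 * (k : ℝ) ≤ n := by exact_mod_cast (by omega : 2 * k ≤ n)
  have hW : HF n m A ^ 2 = ∑ a, cF n m A a ^ 2 :=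
    Real.sq_sqrt (Finset.sum_nonneg fun _ _ => sq_nonneg _)
  set P := Finset.univ.filter (fun i : Fin n => (i : ℕ) < q) with hP
  set Q := Finset.univ.filter (fun i : Fin n => q ≤ (i : ℕ)) with hQ
  have hPQ : Disjoint P Q := by
    rw [Finset.disjoint_left]; intro i; simp [hP, hQ]
  have hU : P ∪ Q = Finset.univ := by
    ext i; simp [hP, hQ]; omega
  have cP : P.card = q := by
    rw [hP, Fin.card_filter_val_lt]; omega
  have cPQ : P.card + Q.card = n := by
    rw [← Finset.card_union_of_disjoint hPQ, hU]; simp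
  have cP' : (P.card : ℝ) = q := by rw [cP]
  have cQ' : (Q.card : ℝ) = (n : ℝ) - q := by
    have h : (P.card : ℝ) + Q.card = n := by exact_mod_cast cPQ
    linarith
  have h1 := aux_ric n m c _ A hA hRic P Q hPQ hU q cP' (by linarith)
  have h2 := aux_ric n m c _ A hA hRic Q P hPQ.symm (by rw [Finset.union_comm, hU]) _ cQ'
    (by linarith)
  have hb : ∀ a, ∑ i ∈ Q, A a i i = n * cF n m A a - ∑ i ∈ P, A a i i := by
    intro a
    have hn0 : (n : ℝ) ≠ 0 := by linarith
    have : ∑ i ∈ P, A a i i + ∑ i ∈ Q, A a i i = (A a).trace := by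
      rw [← Finset.sum_union hPQ, hU]; rfl
    rw [cF, mul_div_cancel₀ _ hn0]; linarith
  have hX' : ∀ a, ∑ i ∈ Q, ∑ j ∈ P, A a i j ^ 2 = ∑ i ∈ P, ∑ j ∈ Q, A a i j ^ 2 := by
    intro a
    rw [Finset.sum_comm]
    refine Finset.sum_congr rfl fun i _ => Finset.sum_congr rfl fun j _ => ?_
    rw [(hA a).apply i j]
  have hT : ThetaF n m A q = 2 * (∑ a, ∑ i ∈ P, ∑ j ∈ Q, A a i j ^ 2) -
      ∑ a, (∑ i ∈ P, A a i i) * ∑ i ∈ Q, A a i i := by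
    have e1 : ∀ f : Fin m → Fin n → Fin n → ℝ, ∑ a, ∑ i ∈ P, ∑ j ∈ Q, f a i j =
        ∑ i ∈ P, ∑ j ∈ Q, ∑ a, f a i j := by
      intro f
      rw [Finset.sum_comm]
      exact Finset.sum_congr rfl fun i _ => Finset.sum_comm
    simp only [Finset.sum_mul_sum]
    rw [e1, e1]
    simp only [ThetaF, Finset.sum_sub_distrib, Finset.mul_sum, ← hP, ← hQ]
  obtain ⟨hD, hdl⟩ := aux_delta n k q rq rqk rkn
  simp only [hb, hX'] at h2 hT
  rw [hT]
  have key := aux_final n q c (alphaF n k (HF n m A) c) (∑ a, cF n m A a ^ 2)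
    (∑ a, (∑ i ∈ P, A a i i) ^ 2) (∑ a, cF n m A a * ∑ i ∈ P, A a i i)
    (∑ a, ∑ i ∈ P, ∑ j ∈ Q, A a i j ^ 2)
    ((k : ℝ) * ((n : ℝ) - (k : ℝ)) * ((n : ℝ) - 2) /
        ((k : ℝ) * ((n : ℝ) - 2 * (k : ℝ)) + (n : ℝ) * ((k : ℝ) - 1) * ((n : ℝ) - (k : ℝ))) *
        (c + ∑ a, cF n m A a ^ 2)) rq (by linarith)
    (by rw [alphaF, hW]; ring)
    (Finset.sum_nonneg fun _ _ => Finset.sum_nonneg fun _ _ => Finset.sum_nonneg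
      fun _ _ => sq_nonneg _)
    (by
      refine h1.trans_eq ?_
      simp only [Finset.sum_sub_distrib, Finset.mul_sum, Finset.sum_div, mul_assoc])
    (by
      refine h2.trans_eq ?_
      congr 1
      simp only [Finset.mul_sum (s := (Finset.univ : Finset (Fin m))),
        ← Finset.sum_sub_distrib, ← Finset.sum_add_distrib, Finset.sum_div]
      refine Finset.sum_congr rfl fun a _ => ?_
      ring)
    (by
      rw [hW] at hpos
      have := mul_lt_mul_of_pos_right hdl hpos
      linarith)
  refine lt_of_eq_of_lt ?_ key
  congr 1
  simp only [Finset.mul_sum (s := (Finset.univ : Finset (Fin m))), ← Finset.sum_sub_distrib]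
  refine Finset.sum_congr rfl fun a _ => ?_
  ring
end

section
/- Fix integers n ≥ 5, m ≥ 1, a real c, symmetric matrices H_1,…,H_m as in the context, and an integer k with 2 ≤ k ≤ ⌊n/2⌋. If Ric − α(n,k,H,c)·I_n is positive definite (i.e., xᵀ·Ric·x > α(n,k,H,c)·|x|² for every nonzero x ∈ ℝⁿ), then Θ_k < k(n−k)c. -/
open Finset Matrix

theorem arith_aux (n k N X P Q δ D : ℝ) (hn : 5 ≤ n) (hk : 2 ≤ k) (hkn : 2 * k ≤ n)
    (hD : D = k * (n - 2 * k) + n * (k - 1) * (n - k))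
    (hδ : δ = k * (n - k) * (n - 2) / D) (hN : 0 ≤ N)
    (hI : N < k * δ * X + (n - 2) * P - Q / k)
    (hJ : N < (n - k) * δ * X - (n - 2) * P - Q / (n - k)) :
    2 * N + Q - (n - 2 * k) * P < k * (n - k) * X := by
  have hnk : 0 < n - k := by linarith
  have hn2 : 0 < n - 2 := by linarith
  have hk0 : 0 < k := by linarith
  have hn0 : 0 < n := by linarith
  have hDpos : 0 < D := by
    rw [hD]
    have h1 : 0 ≤ k * (n - 2 * k) := mul_nonneg hk0.le (by linarith)
    have h2 : 0 < n * (k - 1) * (n - k) := mul_pos (mul_pos hn0 (by linarith)) hnk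
    linarith
  obtain ⟨d, hd⟩ : ∃ d, d = (n - 2 * k) / (n - 2) := ⟨_, rfl⟩
  have hd0 : 0 ≤ d := by rw [hd]; exact div_nonneg (by linarith) hn2.le
  have hd1 : d ≤ 1 := by rw [hd, div_le_one hn2]; linarith
  have hdn : d * (n - 2) = n - 2 * k := by rw [hd]; field_simp
  have hδD : δ * D = k * (n - k) * (n - 2) := by rw [hδ]; field_simp
  obtain ⟨l, hl⟩ : ∃ l, l = k * (n - k + d) / n := ⟨_, rfl⟩
  obtain ⟨u, hu⟩ : ∃ u, u = (k - d) * (n - k) / n := ⟨_, rfl⟩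
  have hlp : 0 < l := by rw [hl]; exact div_pos (mul_pos hk0 (by linarith)) hn0
  have hup : 0 < u := by rw [hu]; exact div_pos (mul_pos (by linarith) hnk) hn0
  have hlu : l - u = d := by rw [hl, hu]; field_simp; ring
  have hq : l / k + u / (n - k) = 1 := by rw [hl, hu]; field_simp; ring
  have hs : 2 ≤ l + u := by
    have : l + u = (2 * k * (n - k) - d * (n - 2 * k)) / n := by
      rw [hl, hu]; field_simp; ring
    rw [this, le_div_iff₀ hn0]
    have h1 : d * (n - 2 * k) ≤ n - 2 * k := by
      nlinarith
    nlinarith [mul_nonneg (sub_nonneg.2 hk) (by linarith : 0 ≤ n - 2 - k)]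
  have hX : (l * k + u * (n - k)) * δ = k * (n - k) := by
    have h1 : l * k + u * (n - k) = k * (n - k) - d * (n - 2 * k) := by
      rw [hl, hu]; field_simp; ring
    have h2 : (l * k + u * (n - k)) * (n - 2) = D := by
      rw [h1, hD]
      have : (k * (n - k) - d * (n - 2 * k)) * (n - 2)
        = k * (n - k) * (n - 2) - (d * (n - 2)) * (n - 2 * k) := by ring
      rw [this, hdn]; ring
    have h3 : (n - 2) * ((l * k + u * (n - k)) * δ) = (n - 2) * (k * (n - k)) := by
      calc _ = δ * ((l * k + u * (n - k)) * (n - 2)) := by ring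
        _ = _ := by rw [h2, hδD]; ring
    exact mul_left_cancel₀ hn2.ne' h3
  have e1 := mul_lt_mul_of_pos_left hI hlp
  have e2 := mul_lt_mul_of_pos_left hJ hup
  have e3 := mul_nonneg (sub_nonneg.2 hs) hN
  have e4 : l * (k * δ * X + (n - 2) * P - Q / k)
      + u * ((n - k) * δ * X - (n - 2) * P - Q / (n - k))
      = ((l * k + u * (n - k)) * δ) * X + ((l - u) * (n - 2)) * P
        - (l / k + u / (n - k)) * Q := by ring
  rw [hX, hlu, hdn, hq] at e4
  linarith

theorem ric_diag (n m : ℕ) (c : ℝ) (A : Fin m → Matrix (Fin n) (Fin n) ℝ)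
    (hA : ∀ a : Fin m, (A a).IsSymm) (i : Fin n) :
    RicF n m c A i i = ((n : ℝ) - 1) * c
      + ∑ a, ((n : ℝ) * cF n m A a * A a i i - ∑ j, (A a i j) ^ 2) := by
  simp only [RicF, Matrix.add_apply, Matrix.smul_apply, Matrix.one_apply_eq, Matrix.sum_apply,
    Matrix.sub_apply, Matrix.mul_apply, smul_eq_mul, mul_one]
  congr 1
  refine Finset.sum_congr rfl fun a _ => ?_
  congr 1
  refine Finset.sum_congr rfl fun j _ => ?_
  rw [(hA a).apply i j, sq]

/-- Block estimate. -/
theorem block_aux (n m : ℕ) (c al : ℝ) (A : Fin m → Matrix (Fin n) (Fin n) ℝ)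
    (hA : ∀ a : Fin m, (A a).IsSymm)
    (hR : ∀ i, al < RicF n m c A i i) (I : Finset (Fin n)) (hI : I.Nonempty) :
    (I.card : ℝ) * al < (I.card : ℝ) * (((n : ℝ) - 1) * c)
      + ∑ a, (n : ℝ) * cF n m A a * (∑ i ∈ I, A a i i)
      - (∑ a, (∑ i ∈ I, A a i i) ^ 2) / (I.card : ℝ)
      - ∑ a, ∑ i ∈ I, ∑ j ∈ Iᶜ, (A a i j) ^ 2 := by
  have h1 : ∑ i ∈ I, al < ∑ i ∈ I, RicF n m c A i i :=
    Finset.sum_lt_sum_of_nonempty hI fun i _ => hR i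
  simp only [ric_diag n m c A hA, Finset.sum_add_distrib, Finset.sum_const, nsmul_eq_mul] at h1
  rw [Finset.sum_comm, Finset.sum_congr rfl (fun a _ => Finset.sum_sub_distrib _ _),
    Finset.sum_sub_distrib] at h1
  simp only [← Finset.mul_sum] at h1
  have hc : (0 : ℝ) < I.card := by exact_mod_cast hI.card_pos
  have h2 : (∑ a, (∑ i ∈ I, A a i i) ^ 2) / (I.card : ℝ)
      + ∑ a, ∑ i ∈ I, ∑ j ∈ Iᶜ, (A a i j) ^ 2 ≤ ∑ a, ∑ i ∈ I, ∑ j, (A a i j) ^ 2 := by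
    rw [Finset.sum_div, ← Finset.sum_add_distrib]
    refine Finset.sum_le_sum fun a _ => ?_
    have h3 : ∑ i ∈ I, ∑ j, (A a i j) ^ 2
        = ∑ i ∈ I, ∑ j ∈ I, (A a i j) ^ 2 + ∑ i ∈ I, ∑ j ∈ Iᶜ, (A a i j) ^ 2 := by
      rw [← Finset.sum_add_distrib]
      exact Finset.sum_congr rfl fun i _ => (Finset.sum_add_sum_compl I _).symm
    have h4 : (∑ i ∈ I, A a i i) ^ 2 / (I.card : ℝ) ≤ ∑ i ∈ I, (A a i i) ^ 2 := by
      rw [div_le_iff₀ hc, mul_comm]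
      exact sq_sum_le_card_mul_sum_sq
    have h5 : ∑ i ∈ I, (A a i i) ^ 2 ≤ ∑ i ∈ I, ∑ j ∈ I, (A a i j) ^ 2 :=
      Finset.sum_le_sum fun i hi =>
        Finset.single_le_sum (f := fun j => (A a i j) ^ 2) (fun j _ => sq_nonneg _) hi
    linarith
  linarith

theorem stmt_12 (n m : ℕ) (hn : 5 ≤ n) (hm : 1 ≤ m) (c : ℝ)
    (A : Fin m → Matrix (Fin n) (Fin n) ℝ) (hA : ∀ a : Fin m, (A a).IsSymm)
    (k : ℕ) (hk : 2 ≤ k) (hk' : k ≤ n / 2)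
    (hRic : ∀ x : Fin n → ℝ, x ≠ 0 →
      alphaF n k (HF n m A) c * ∑ i : Fin n, (x i) ^ 2 < x ⬝ᵥ (RicF n m c A).mulVec x) :
    ThetaF n m A k < (k : ℝ) * ((n : ℝ) - (k : ℝ)) * c := by
  have hR : ∀ i, alphaF n k (HF n m A) c < RicF n m c A i i := by
    intro i
    have := hRic (Pi.single i 1) (by simp)
    simpa [Pi.single_apply] using this
  have hkn : 2 * k ≤ n := by omega
  have hnR : (5 : ℝ) ≤ n := by exact_mod_cast hn
  have hkR : (2 : ℝ) ≤ k := by exact_mod_cast hk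
  have hknR : 2 * (k : ℝ) ≤ n := by exact_mod_cast hkn
  obtain ⟨I, hI⟩ : ∃ I, I = Finset.univ.filter (fun i : Fin n => (i : ℕ) < k) := ⟨_, rfl⟩
  have hIc : Finset.univ.filter (fun j : Fin n => k ≤ (j : ℕ)) = Iᶜ := by
    ext j; simp [hI]
  have hcard : I.card = k := by
    rw [hI, Fin.card_filter_val_lt]; omega
  have hcardc : (Iᶜ.card : ℝ) = (n : ℝ) - k := by
    rw [Finset.card_compl, hcard, Fintype.card_fin, Nat.cast_sub (by omega)]
  have b1 := block_aux n m c _ A hA hR I (Finset.card_pos.1 (by omega))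
  have b2 := block_aux n m c _ A hA hR Iᶜ (Finset.card_pos.1 (by
    have : (0 : ℝ) < Iᶜ.card := by rw [hcardc]; linarith
    exact_mod_cast this))
  rw [hcard] at b1
  rw [hcardc, compl_compl] at b2
  have hH : HF n m A ^ 2 = ∑ a, cF n m A a ^ 2 :=
    Real.sq_sqrt (Finset.sum_nonneg fun a _ => sq_nonneg _)
  obtain ⟨N, hN⟩ : ∃ N, N = ∑ a, ∑ i ∈ I, ∑ j ∈ Iᶜ, (A a i j) ^ 2 := ⟨_, rfl⟩
  have hN' : ∑ a, ∑ i ∈ Iᶜ, ∑ j ∈ I, (A a i j) ^ 2 = N := by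
    rw [hN]
    refine Finset.sum_congr rfl fun a _ => ?_
    rw [Finset.sum_comm]
    refine Finset.sum_congr rfl fun i _ => Finset.sum_congr rfl fun j _ => ?_
    rw [(hA a).apply i j]
  have hN0 : 0 ≤ N := by rw [hN]; positivity
  obtain ⟨t, ht⟩ : ∃ t : Fin m → ℝ, ∀ a, ∑ i ∈ I, A a i i = k * cF n m A a + t a :=
    ⟨fun a => ∑ i ∈ I, A a i i - k * cF n m A a, fun a => by ring⟩
  have ht' : ∀ a, ∑ i ∈ Iᶜ, A a i i = ((n : ℝ) - k) * cF n m A a - t a := by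
    intro a
    have h1 : ∑ i ∈ I, A a i i + ∑ i ∈ Iᶜ, A a i i = (n : ℝ) * cF n m A a := by
      rw [Finset.sum_add_sum_compl, cF, Matrix.trace]
      field_simp
      simp
    rw [ht a] at h1
    linarith
  have hTheta : ThetaF n m A k
      = 2 * N - ∑ a, (∑ i ∈ I, A a i i) * (∑ i ∈ Iᶜ, A a i i) := by
    rw [ThetaF, ← hI, hIc]
    simp only [Finset.sum_sub_distrib, ← Finset.mul_sum]
    congr 1
    · congr 1
      rw [hN]
      symm
      refine Finset.sum_comm.trans (Finset.sum_congr rfl fun i _ => ?_)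
      exact Finset.sum_comm
    · rw [Finset.sum_congr rfl (fun i _ => Finset.sum_comm), Finset.sum_comm]
      refine Finset.sum_congr rfl fun a _ => ?_
      rw [Finset.sum_mul_sum]
  obtain ⟨P, hP⟩ : ∃ P, P = ∑ a, cF n m A a * t a := ⟨_, rfl⟩
  obtain ⟨Q, hQ⟩ : ∃ Q, Q = ∑ a, t a ^ 2 := ⟨_, rfl⟩
  have s1 : ∑ a, (n : ℝ) * cF n m A a * (∑ i ∈ I, A a i i)
      = n * k * HF n m A ^ 2 + n * P := by
    rw [hH, hP, Finset.mul_sum, Finset.mul_sum, ← Finset.sum_add_distrib]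
    exact Finset.sum_congr rfl fun a _ => by rw [ht]; ring
  have s2 : ∑ a, (n : ℝ) * cF n m A a * (∑ i ∈ Iᶜ, A a i i)
      = n * (n - k) * HF n m A ^ 2 - n * P := by
    rw [hH, hP, Finset.mul_sum, Finset.mul_sum, ← Finset.sum_sub_distrib]
    exact Finset.sum_congr rfl fun a _ => by rw [ht']; ring
  have s3 : ∑ a, (∑ i ∈ I, A a i i) ^ 2
      = (k : ℝ) ^ 2 * HF n m A ^ 2 + 2 * k * P + Q := by
    rw [hH, hP, hQ, Finset.mul_sum, Finset.mul_sum, ← Finset.sum_add_distrib,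
      ← Finset.sum_add_distrib]
    exact Finset.sum_congr rfl fun a _ => by rw [ht]; ring
  have s4 : ∑ a, (∑ i ∈ Iᶜ, A a i i) ^ 2
      = ((n : ℝ) - k) ^ 2 * HF n m A ^ 2 - 2 * (n - k) * P + Q := by
    rw [hH, hP, hQ, Finset.mul_sum, Finset.mul_sum, ← Finset.sum_sub_distrib,
      ← Finset.sum_add_distrib]
    exact Finset.sum_congr rfl fun a _ => by rw [ht']; ring
  have s5 : ∑ a, (∑ i ∈ I, A a i i) * (∑ i ∈ Iᶜ, A a i i)
      = (k : ℝ) * (n - k) * HF n m A ^ 2 + (n - 2 * k) * P - Q := by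
    rw [hH, hP, hQ, Finset.mul_sum, Finset.mul_sum, ← Finset.sum_add_distrib,
      ← Finset.sum_sub_distrib]
    exact Finset.sum_congr rfl fun a _ => by rw [ht, ht']; ring
  rw [s1, s3, ← hN] at b1
  rw [s2, s4, hN'] at b2
  rw [hTheta, s5]
  have hk0 : (k : ℝ) ≠ 0 := by linarith
  have hnk0 : (n : ℝ) - k ≠ 0 := by linarith
  obtain ⟨D, hD⟩ : ∃ D : ℝ, D = k * (n - 2 * k) + n * (k - 1) * (n - k) := ⟨_, rfl⟩
  obtain ⟨δ, hδ⟩ : ∃ δ : ℝ, δ = k * (n - k) * (n - 2) / D := ⟨_, rfl⟩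
  have hal : alphaF n k (HF n m A) c = ((n : ℝ) - 1 - δ) * (c + HF n m A ^ 2) := by
    rw [alphaF, hδ, hD]
  rw [hal] at b1 b2
  generalize HF n m A ^ 2 = H at *
  have q1 : ((k : ℝ) ^ 2 * H + 2 * k * P + Q) / k = k * H + 2 * P + Q / k := by
    field_simp
  have q2 : (((n : ℝ) - k) ^ 2 * H - 2 * (n - k) * P + Q) / (n - k)
      = (n - k) * H - 2 * P + Q / (n - k) := by
    field_simp
  rw [q1] at b1
  rw [q2] at b2
  have := arith_aux n k N (c + H) P Q δ D hnR hkR hknR hD hδ hN0 (by linarith) (by linarith)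
  linarith
end

section
/- Fix integers n ≥ 5, m ≥ 1, a real c, symmetric matrices H_1,…,H_m as in the context, and an integer k with 2 ≤ k ≤ ⌊n/2⌋. Suppose Ric − α(n,k,H,c)·I_n is positive semidefinite and that equality Θ_k = k(n−k)c holds. Then for each 1 ≤ α ≤ m there exist reals λ_α and μ_α such that H_α is the block diagonal matrix diag(λ_α·I_k, μ_α·I_{n−k}) (i.e., (H_α)_{ij} = 0 for i ≠ j, (H_α)_{ii} = λ_α for 1 ≤ i ≤ k, and (H_α)_{jj} = μ_α for k+1 ≤ j ≤ n); moreover Ric = α(n,k,H,c)·I_n. -/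
open Finset

theorem hh_dev {n : ℕ} (s : Finset (Fin n)) (M : Matrix (Fin n) (Fin n) ℝ) (t q : ℝ)
    (hq : (s.card : ℝ) = q) (hq0 : q ≠ 0) (ht : ∑ i ∈ s, M i i = t) :
    ∑ i ∈ s, ∑ j ∈ s, (M i j - if i = j then t / q else 0) ^ 2 =
      ∑ i ∈ s, ∑ j ∈ s, M i j ^ 2 - t ^ 2 / q := by
  have h1 : ∀ i ∈ s, ∑ j ∈ s, (M i j - if i = j then t / q else 0) ^ 2 =
      ∑ j ∈ s, M i j ^ 2 + (- 2 * (t / q) * M i i + (t / q) ^ 2) := by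
    intro i hi
    have h2 : ∀ j ∈ s, (M i j - if i = j then t / q else 0) ^ 2 =
        M i j ^ 2 + if i = j then (- 2 * (t / q) * M i i + (t / q) ^ 2) else 0 := by
      intro j _
      split_ifs with h
      · subst h; ring
      · ring
    rw [Finset.sum_congr rfl h2, Finset.sum_add_distrib, Finset.sum_ite_eq, if_pos hi]
  rw [Finset.sum_congr rfl h1, Finset.sum_add_distrib, Finset.sum_add_distrib, ← Finset.mul_sum,
    ht, Finset.sum_const, nsmul_eq_mul, hq]
  field_simp
  ring

theorem hh_alg (n k c B TT TS SS V1 V2 R1 R2 al : ℝ) (hn : 5 ≤ n) (hk : 2 ≤ k) (hk' : 2 * k ≤ n)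
    (hal : al = (n - 1 - k * (n - k) * (n - 2) / (k * (n - 2 * k) + n * (k - 1) * (n - k))) *
      (c + (TT + 2 * TS + SS) / n ^ 2))
    (hth : 2 * B - TS = k * (n - k) * c)
    (h1 : R1 = k * ((n - 1) * c) + (TT + TS) - (TT / k + V1 + B) - k * al)
    (h2 : R2 = (n - k) * ((n - 1) * c) + (TS + SS) - (SS / (n - k) + V2 + B) - (n - k) * al)
    (hB : 0 ≤ B) (hV1 : 0 ≤ V1) (hV2 : 0 ≤ V2) (hR1 : 0 ≤ R1) (hR2 : 0 ≤ R2) :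
    B = 0 ∧ V1 = 0 ∧ V2 = 0 ∧ R1 = 0 ∧ R2 = 0 := by
  have hk0 : 0 < k := by linarith
  have hnk : 0 < n - k := by linarith
  have hn0 : 0 < n := by linarith
  have hD : 0 < k * (n - 2 * k) + n * (k - 1) * (n - k) := by
    have : 0 < n * (k - 1) * (n - k) := by
      apply mul_pos (mul_pos hn0 (by linarith)) hnk
    have : 0 ≤ k * (n - 2 * k) := mul_nonneg hk0.le (by linarith)
    linarith
  have hx : 0 < k * (n - k - 1) := mul_pos hk0 (by linarith)
  have hy : 0 < (k - 1) * (n - k) := mul_pos (by linarith) hnk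
  have hb : 0 < 2 * k * (n - k) + 4 - 3 * n := by nlinarith [mul_nonneg (sub_nonneg.2 hk) (show 0 ≤ n - k - 2 by linarith)]
  have hc : c = (2 * B - TS) / (k * (n - k)) := by
    rw [hth]; field_simp
  have key : k * (n - k - 1) * R1 + (k - 1) * (n - k) * R2 + k * (n - k - 1) * V1
      + (k - 1) * (n - k) * V2 + (2 * k * (n - k) + 4 - 3 * n) * B = 0 := by
    have hDn := hD.ne'
    have hkn := hk0.ne'
    have hnkn := hnk.ne'
    have hnn := hn0.ne'
    rw [h1, h2, hal, hc]
    generalize hDD : k * (n - 2 * k) + n * (k - 1) * (n - k) = D at *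
    field_simp
    rw [← hDD]
    ring
  have p1 := mul_nonneg hx.le hR1
  have p2 := mul_nonneg hy.le hR2
  have p3 := mul_nonneg hx.le hV1
  have p4 := mul_nonneg hy.le hV2
  have p5 := mul_nonneg hb.le hB
  refine ⟨?_, ?_, ?_, ?_, ?_⟩
  · exact (mul_eq_zero.1 (by linarith : (2 * k * (n - k) + 4 - 3 * n) * B = 0)).resolve_left hb.ne'
  · exact (mul_eq_zero.1 (by linarith : k * (n - k - 1) * V1 = 0)).resolve_left hx.ne'
  · exact (mul_eq_zero.1 (by linarith : (k - 1) * (n - k) * V2 = 0)).resolve_left hy.ne'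
  · exact (mul_eq_zero.1 (by linarith : k * (n - k - 1) * R1 = 0)).resolve_left hx.ne'
  · exact (mul_eq_zero.1 (by linarith : (k - 1) * (n - k) * R2 = 0)).resolve_left hy.ne'

theorem hh_ric {n m : ℕ} (c al : ℝ) (A : Fin m → Matrix (Fin n) (Fin n) ℝ)
    (hA : ∀ a : Fin m, (A a).IsSymm) (s r : Finset (Fin n)) (q : ℝ) (hq : (s.card : ℝ) = q)
    (hsr : ∀ f : Fin n → ℝ, ∑ i, f i = ∑ i ∈ s, f i + ∑ i ∈ r, f i) (hn : (n : ℝ) ≠ 0) :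
    ∑ i ∈ s, (RicF n m c A - al • (1 : Matrix (Fin n) (Fin n) ℝ)) i i =
      q * (((n : ℝ) - 1) * c) +
      (∑ a, (∑ i ∈ s, A a i i) ^ 2 + ∑ a, (∑ i ∈ s, A a i i) * (∑ i ∈ r, A a i i)) -
      (∑ a, ∑ i ∈ s, ∑ j ∈ s, A a i j ^ 2 + ∑ a, ∑ i ∈ s, ∑ j ∈ r, A a i j ^ 2) - q * al := by
  have h1 : ∀ i, (RicF n m c A - al • (1 : Matrix (Fin n) (Fin n) ℝ)) i i =
      ((n : ℝ) - 1) * c - al + ∑ a, ((∑ i ∈ s, A a i i + ∑ i ∈ r, A a i i) * A a i i -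
        (∑ j ∈ s, A a i j ^ 2 + ∑ j ∈ r, A a i j ^ 2)) := by
    intro i
    have h2 : ∀ a, (((n : ℝ) * cF n m A a) • A a - A a * A a) i i =
        (∑ i ∈ s, A a i i + ∑ i ∈ r, A a i i) * A a i i -
        (∑ j ∈ s, A a i j ^ 2 + ∑ j ∈ r, A a i j ^ 2) := by
      intro a
      rw [← hsr, ← hsr]
      simp only [Matrix.sub_apply, Matrix.smul_apply, smul_eq_mul, Matrix.mul_apply, cF,
        Matrix.trace, Matrix.diag_apply]
      rw [mul_div_cancel₀ _ hn]
      congr 1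
      apply Finset.sum_congr rfl
      intro j _
      rw [(hA a).apply i j, sq]
    simp only [RicF, Matrix.sub_apply, Matrix.add_apply, Matrix.sum_apply]
    rw [← Finset.sum_congr rfl (fun a _ => h2 a)]
    simp
    ring
  simp only [h1]
  rw [Finset.sum_add_distrib, Finset.sum_const, nsmul_eq_mul, hq, Finset.sum_comm]
  have h3 : ∀ a, ∑ i ∈ s, ((∑ i ∈ s, A a i i + ∑ i ∈ r, A a i i) * A a i i -
        (∑ j ∈ s, A a i j ^ 2 + ∑ j ∈ r, A a i j ^ 2)) =
      ((∑ i ∈ s, A a i i) ^ 2 + (∑ i ∈ s, A a i i) * (∑ i ∈ r, A a i i)) -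
      (∑ i ∈ s, ∑ j ∈ s, A a i j ^ 2 + ∑ i ∈ s, ∑ j ∈ r, A a i j ^ 2) := by
    intro a
    rw [Finset.sum_sub_distrib, ← Finset.mul_sum, Finset.sum_add_distrib]
    ring
  simp only [h3, Finset.sum_sub_distrib, Finset.sum_add_distrib]
  ring

theorem stmt_13 (n m : ℕ) (hn : 5 ≤ n) (hm : 1 ≤ m) (c : ℝ)
    (A : Fin m → Matrix (Fin n) (Fin n) ℝ) (hA : ∀ a : Fin m, (A a).IsSymm)
    (k : ℕ) (hk : 2 ≤ k) (hk' : k ≤ n / 2)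
    (hRic : (RicF n m c A -
        alphaF n k (HF n m A) c • (1 : Matrix (Fin n) (Fin n) ℝ)).PosSemidef)
    (heq : ThetaF n m A k = (k : ℝ) * ((n : ℝ) - (k : ℝ)) * c) :
    (∀ a : Fin m, ∃ lam mu : ℝ,
      (∀ i j : Fin n, i ≠ j → A a i j = 0) ∧
      (∀ i : Fin n, (i : ℕ) < k → A a i i = lam) ∧
      (∀ j : Fin n, k ≤ (j : ℕ) → A a j j = mu)) ∧
    RicF n m c A = alphaF n k (HF n m A) c • (1 : Matrix (Fin n) (Fin n) ℝ) := by
  have hnR : (5 : ℝ) ≤ n := by exact_mod_cast hn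
  have hkR : (2 : ℝ) ≤ k := by exact_mod_cast hk
  have hk2 : 2 * k ≤ n := by omega
  have hk2R : 2 * (k : ℝ) ≤ n := by exact_mod_cast hk2
  have hn0 : (n : ℝ) ≠ 0 := by linarith
  have hk0 : (k : ℝ) ≠ 0 := by linarith
  have hnk0 : (n : ℝ) - k ≠ 0 := by intro h; linarith
  unfold ThetaF at heq
  set al := alphaF n k (HF n m A) c with hal
  set P := Finset.univ.filter (fun i : Fin n => (i : ℕ) < k) with hP
  set Q := Finset.univ.filter (fun i : Fin n => k ≤ (i : ℕ)) with hQ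
  have hPQ : ∀ f : Fin n → ℝ, ∑ i, f i = ∑ i ∈ P, f i + ∑ i ∈ Q, f i := by
    intro f
    have := Finset.sum_filter_add_sum_filter_not Finset.univ (fun i : Fin n => (i : ℕ) < k) f
    simp only [not_lt] at this
    exact this.symm
  have hPc : (P.card : ℝ) = k := by
    have : P.card = k := by
      rw [hP, Fin.card_filter_val_lt]
      omega
    rw [this]
  have hQc : (Q.card : ℝ) = (n : ℝ) - k := by
    have := hPQ (fun _ => 1)
    simp only [Finset.sum_const, nsmul_eq_mul, mul_one, Finset.card_univ, Fintype.card_fin] at this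
    linarith
  have hR1 := hh_ric c al A hA P Q _ hPc hPQ hn0
  have hR2 := hh_ric c al A hA Q P _ hQc (fun f => by rw [hPQ f, add_comm]) hn0
  have hd1 := fun a => hh_dev P (A a) _ _ hPc hk0 rfl
  have hd2 := fun a => hh_dev Q (A a) _ _ hQc hnk0 rfl
  have hBs : ∑ a, ∑ i ∈ Q, ∑ j ∈ P, A a i j ^ 2 = ∑ a, ∑ i ∈ P, ∑ j ∈ Q, A a i j ^ 2 := by
    apply Finset.sum_congr rfl
    intro a _
    rw [Finset.sum_comm]
    apply Finset.sum_congr rfl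
    intro i _
    apply Finset.sum_congr rfl
    intro j _
    rw [(hA a).apply i j]
  have hTSs : ∑ a, (∑ i ∈ Q, A a i i) * (∑ i ∈ P, A a i i) =
      ∑ a, (∑ i ∈ P, A a i i) * (∑ i ∈ Q, A a i i) :=
    Finset.sum_congr rfl (fun a _ => mul_comm _ _)
  have hV1 := Finset.sum_congr rfl (fun a (_ : a ∈ Finset.univ) => hd1 a)
  have hV2 := Finset.sum_congr rfl (fun a (_ : a ∈ Finset.univ) => hd2 a)
  rw [Finset.sum_sub_distrib, ← Finset.sum_div] at hV1 hV2
  have hth : 2 * (∑ a, ∑ i ∈ P, ∑ j ∈ Q, A a i j ^ 2) -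
      ∑ a, (∑ i ∈ P, A a i i) * (∑ i ∈ Q, A a i i) = (k : ℝ) * ((n : ℝ) - k) * c := by
    rw [← heq]
    simp only [Finset.sum_sub_distrib, ← Finset.mul_sum]
    congr 1
    · congr 1
      rw [Finset.sum_comm]
      apply Finset.sum_congr rfl
      intro i _
      rw [Finset.sum_comm]
    · simp only [Finset.sum_mul_sum]
      rw [Finset.sum_comm]
      apply Finset.sum_congr rfl
      intro i _
      rw [Finset.sum_comm]
  have hH : HF n m A ^ 2 = (∑ a, (∑ i ∈ P, A a i i) ^ 2 +
      2 * ∑ a, (∑ i ∈ P, A a i i) * (∑ i ∈ Q, A a i i) +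
      ∑ a, (∑ i ∈ Q, A a i i) ^ 2) / (n : ℝ) ^ 2 := by
    rw [HF, Real.sq_sqrt (Finset.sum_nonneg (fun a _ => sq_nonneg _)), Finset.mul_sum,
      ← Finset.sum_add_distrib, ← Finset.sum_add_distrib, Finset.sum_div]
    apply Finset.sum_congr rfl
    intro a _
    simp only [cF, Matrix.trace, Matrix.diag_apply]
    rw [hPQ]
    ring
  rw [alphaF, hH] at hal
  have hdiag : ∀ i, 0 ≤ (RicF n m c A - al • (1 : Matrix (Fin n) (Fin n) ℝ)) i i :=
    fun i => hRic.diag_nonneg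
  rw [hBs, hTSs] at hR2
  obtain ⟨hB, hV10, hV20, hR10, hR20⟩ := hh_alg n k c _ _ _ _ _ _ _ _ al hnR hkR hk2R hal hth
    (hR1.trans (by rw [hV1]; ring)) (hR2.trans (by rw [hV2]; ring))
    (Finset.sum_nonneg fun a _ => Finset.sum_nonneg fun i _ => Finset.sum_nonneg fun j _ =>
      sq_nonneg _)
    (Finset.sum_nonneg fun a _ => Finset.sum_nonneg fun i _ => Finset.sum_nonneg fun j _ =>
      sq_nonneg _)
    (Finset.sum_nonneg fun a _ => Finset.sum_nonneg fun i _ => Finset.sum_nonneg fun j _ =>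
      sq_nonneg _)
    (Finset.sum_nonneg fun i _ => hdiag i) (Finset.sum_nonneg fun i _ => hdiag i)
  have ext0 : ∀ (s r : Finset (Fin n)) (F : Fin m → Fin n → Fin n → ℝ),
      ∑ a, ∑ i ∈ s, ∑ j ∈ r, F a i j ^ 2 = 0 → ∀ a, ∀ i ∈ s, ∀ j ∈ r, F a i j = 0 := by
    intro s r F h a i hi j hj
    have g1 := (Finset.sum_eq_zero_iff_of_nonneg (fun a _ => Finset.sum_nonneg fun i _ =>
      Finset.sum_nonneg fun j _ => sq_nonneg _)).1 h a (Finset.mem_univ _)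
    have g2 := (Finset.sum_eq_zero_iff_of_nonneg (fun i _ =>
      Finset.sum_nonneg fun j _ => sq_nonneg _)).1 g1 i hi
    have g3 := (Finset.sum_eq_zero_iff_of_nonneg (fun j _ => sq_nonneg _)).1 g2 j hj
    exact pow_eq_zero_iff two_ne_zero |>.1 g3
  have eB := ext0 P Q (fun a i j => A a i j) hB
  have e1 := ext0 P P (fun a i j => A a i j - if i = j then (∑ i ∈ P, A a i i) / (k : ℝ) else 0) hV10
  have e2 := ext0 Q Q (fun a i j => A a i j - if i = j then (∑ i ∈ Q, A a i i) / ((n : ℝ) - k) else 0) hV20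
  have mP : ∀ i : Fin n, (i : ℕ) < k → i ∈ P := fun i h => by simp [hP, h]
  have mQ : ∀ i : Fin n, k ≤ (i : ℕ) → i ∈ Q := fun i h => by simp [hQ, h]
  constructor
  · intro a
    refine ⟨(∑ i ∈ P, A a i i) / (k : ℝ), (∑ i ∈ Q, A a i i) / ((n : ℝ) - k), ?_, ?_, ?_⟩
    · intro i j hij
      rcases lt_or_ge (i : ℕ) k with hi | hi <;> rcases lt_or_ge (j : ℕ) k with hj | hj
      · have := e1 a i (mP i hi) j (mP j hj)
        simpa [hij] using this
      · exact eB a i (mP i hi) j (mQ j hj)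
      · rw [← (hA a).apply i j]
        exact eB a j (mP j hj) i (mQ i hi)
      · have := e2 a i (mQ i hi) j (mQ j hj)
        simpa [hij] using this
    · intro i hi
      have := e1 a i (mP i hi) i (mP i hi)
      simp only [if_true] at this
      linarith
    · intro i hi
      have := e2 a i (mQ i hi) i (mQ i hi)
      simp only [if_true] at this
      linarith
  · have ht : (RicF n m c A - al • (1 : Matrix (Fin n) (Fin n) ℝ)).trace = 0 := by
      simp only [Matrix.trace, Matrix.diag_apply]
      rw [hPQ, hR10, hR20, add_zero]
    exact sub_eq_zero.1 (hRic.trace_eq_zero_iff.1 ht)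
end
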